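/- Let A ∈ ℂ^{k×k}, B₂ ∈ ℂ^{k×n}, C₂ ∈ ℂ^{n×k}, D₂₂ ∈ ℂ^{n×n}, L ∈ ℂ^{k×n}. For every s ∈ ℂ such that both sI − A and sI − (A + LC₂) are invertible, the matrix M̂(s) := I + C₂(sI − A − LC₂)⁻¹L is invertible with inverse M̂(s)⁻¹ = I − C₂(sI − A)⁻¹L, and with N̂(s) := D₂₂ + C₂(sI − A − LC₂)⁻¹(B₂ + LD₂₂) one has M̂(s)⁻¹ N̂(s) = C₂(sI − A)⁻¹B₂ + D₂₂, i.e. (N̂, M̂) is a left factorization of the plant transfer function P₂₂(s) = C₂(sI − A)⁻¹B₂ + D₂₂. -/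

import Mathlib

open Matrix

/-!
The resolvent identity for `sI - A` and `sI - (A + LC)` gives
`(I - C(sI - A)⁻¹L) C(sI - A - LC)⁻¹ = C(sI - A)⁻¹`, hence
`(I - C(sI - A)⁻¹L) N̂(s) = C(sI - A)⁻¹B + D` for all `B` and `D`. Since `M̂` is the `N̂` of the
plant with `B = 0` and `D = I`, whose transfer function is `I`, the same identity shows that
`I - C(sI - A)⁻¹L` is a left inverse of `M̂(s)`.
-/

section

variable {k m n R : Type*} [Fintype k] [DecidableEq k] [Fintype n] [DecidableEq n] [CommRing R]

theorem one_sub_mul_inv_mul_mul_mul_inv_sub {P : Matrix k k R} {L : Matrix k n R}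
    {C : Matrix n k R} (hP : IsUnit P) (hPLC : IsUnit (P - L * C)) :
    (1 - C * P⁻¹ * L) * (C * (P - L * C)⁻¹) = C * P⁻¹ := by
  have resolvent_identity : P⁻¹ * (L * C) * (P - L * C)⁻¹ = (P - L * C)⁻¹ - P⁻¹ := by
    rw [← neg_sub P⁻¹, Matrix.inv_sub_inv (iff_of_true hP hPLC), sub_sub_cancel_left,
      Matrix.mul_neg, Matrix.neg_mul, neg_neg]
  calc (1 - C * P⁻¹ * L) * (C * (P - L * C)⁻¹)
      = C * ((P - L * C)⁻¹ - P⁻¹ * (L * C) * (P - L * C)⁻¹) := by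
        simp only [Matrix.sub_mul, Matrix.one_mul, Matrix.mul_sub, Matrix.mul_assoc]
    _ = C * P⁻¹ := by rw [resolvent_identity, sub_sub_cancel]

/-- The value at `s` of the transfer function `C (sI - A)⁻¹ B + D` of the state-space realization
`(A, B, C, D)`. It is meaningful only where `sI - A` is invertible; elsewhere the matrix inverse
is `0` and the value is `D`. -/
noncomputable def transferFunction {p : Type*} (A : Matrix k k R) (B : Matrix k m R)
    (C : Matrix p k R) (D : Matrix p m R) (s : R) : Matrix p m R :=
  C * (s • (1 : Matrix k k R) - A)⁻¹ * B + D

variable {A : Matrix k k R} {C : Matrix n k R} {L : Matrix k n R} {s : R}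

theorem transferFunction_neg_mul_transferFunction (B : Matrix k m R) (D : Matrix n m R)
    (hA : IsUnit (s • (1 : Matrix k k R) - A))
    (hALC : IsUnit (s • (1 : Matrix k k R) - (A + L * C))) :
    transferFunction A L (-C) 1 s * transferFunction (A + L * C) (B + L * D) C D s =
      transferFunction A B C D s := by
  rw [← sub_sub] at hALC
  simp only [transferFunction, ← sub_sub]
  generalize s • (1 : Matrix k k R) - A = P at hA hALC ⊢
  calc (-C * P⁻¹ * L + 1) * (C * (P - L * C)⁻¹ * (B + L * D) + D)
      = (1 - C * P⁻¹ * L) * (C * (P - L * C)⁻¹) * (B + L * D) + (1 - C * P⁻¹ * L) * D := by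
        rw [Matrix.neg_mul, Matrix.neg_mul, neg_add_eq_sub, Matrix.mul_add,
          ← Matrix.mul_assoc (1 - C * P⁻¹ * L)]
    _ = C * P⁻¹ * (B + L * D) + (1 - C * P⁻¹ * L) * D := by
        rw [one_sub_mul_inv_mul_mul_mul_inv_sub hA hALC]
    _ = C * P⁻¹ * B + D := by
        rw [Matrix.mul_add, Matrix.sub_mul, Matrix.one_mul, ← Matrix.mul_assoc _ L D,
          add_add_sub_cancel]

theorem transferFunction_neg_mul_transferFunction_eq_one
    (hA : IsUnit (s • (1 : Matrix k k R) - A))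
    (hALC : IsUnit (s • (1 : Matrix k k R) - (A + L * C))) :
    transferFunction A L (-C) 1 s * transferFunction (A + L * C) L C 1 s = 1 := by
  have plant_eq_one : transferFunction A (0 : Matrix k n R) C 1 s = 1 := by
    rw [transferFunction, Matrix.mul_zero, zero_add]
  simpa only [Matrix.mul_one, zero_add, plant_eq_one] using
    transferFunction_neg_mul_transferFunction (0 : Matrix k n R) 1 hA hALC

theorem left_factorization_of_plant_general (B : Matrix k m R) (D : Matrix n m R)
    (hA : IsUnit (s • (1 : Matrix k k R) - A))
    (hALC : IsUnit (s • (1 : Matrix k k R) - (A + L * C))) :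
    IsUnit (transferFunction (A + L * C) L C 1 s)
      ∧ (transferFunction (A + L * C) L C 1 s)⁻¹ = transferFunction A L (-C) 1 s
      ∧ (transferFunction (A + L * C) L C 1 s)⁻¹
          * transferFunction (A + L * C) (B + L * D) C D s = transferFunction A B C D s := by
  have left_inverse := transferFunction_neg_mul_transferFunction_eq_one hA hALC
  have inv_eq := Matrix.inv_eq_left_inv left_inverse
  refine ⟨IsUnit.of_mul_eq_one_right _ left_inverse, inv_eq, ?_⟩
  rw [inv_eq, transferFunction_neg_mul_transferFunction B D hA hALC]

end

/-- For every `s` at which `sI - A` and `sI - (A + LC₂)` are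
invertible, `M̂(s) = I + C₂(sI - A - LC₂)⁻¹L` is invertible with inverse
`I - C₂(sI - A)⁻¹L`, and with `N̂(s) = D₂₂ + C₂(sI - A - LC₂)⁻¹(B₂ + LD₂₂)`
one has `M̂(s)⁻¹N̂(s) = C₂(sI - A)⁻¹B₂ + D₂₂`, i.e. `(N̂, M̂)` is a left
factorization of the plant transfer function `P₂₂`. -/
theorem left_factorization_of_plant (k n : ℕ)
    (A : Matrix (Fin k) (Fin k) ℂ) (B2 : Matrix (Fin k) (Fin n) ℂ)
    (C2 : Matrix (Fin n) (Fin k) ℂ) (D22 : Matrix (Fin n) (Fin n) ℂ)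
    (L : Matrix (Fin k) (Fin n) ℂ)
    (s : ℂ)
    (hA : IsUnit (s • (1 : Matrix (Fin k) (Fin k) ℂ) - A))
    (hALC : IsUnit (s • (1 : Matrix (Fin k) (Fin k) ℂ) - (A + L * C2)))
    (Mhs Nhs : Matrix (Fin n) (Fin n) ℂ)
    (hMhs : Mhs = 1 + C2 * (s • (1 : Matrix (Fin k) (Fin k) ℂ) - A - L * C2)⁻¹ * L)
    (hNhs : Nhs = D22 + C2 *
        (s • (1 : Matrix (Fin k) (Fin k) ℂ) - A - L * C2)⁻¹ * (B2 + L * D22)) :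
    IsUnit Mhs
      ∧ Mhs⁻¹ = 1 - C2 * (s • (1 : Matrix (Fin k) (Fin k) ℂ) - A)⁻¹ * L
      ∧ Mhs⁻¹ * Nhs = C2 * (s • (1 : Matrix (Fin k) (Fin k) ℂ) - A)⁻¹ * B2 + D22 := by
  subst hMhs hNhs
  simpa [transferFunction, sub_sub, add_comm, neg_add_eq_sub] using
    left_factorization_of_plant_general B2 D22 hA hALC
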